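/- arXiv:2204.11027 — 3 statements merged into one kernel-verified Lean document; each statement's English description precedes it below -/
import Mathlib

section
/- Let g be a finite-dimensional simple Lie algebra over ℂ and let L(g) = ℂ[t,t⁻¹] ⊗ g be its loop algebra. A ℂ-subspace J of L(g) is a Lie ideal of L(g) if and only if there exists an ideal I of the Laurent polynomial ring ℂ[t,t⁻¹] such that J = I ⊗ g (the ℂ-span of all elements p ⊗ x with p ∈ I and x ∈ g). Equivalently, since ℂ[t,t⁻¹] is a principal ideal domain, every Lie ideal of L(g) is of the form f·ℂ[t,t⁻¹] ⊗ g for some f ∈ ℂ[t,t⁻¹]. -/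
open scoped TensorProduct

/-- The base ring `ℂ` acts as a Lie algebra of scalars on the loop algebra
`ℂ[t,t⁻¹] ⊗[ℂ] g` (and more generally on `B ⊗[ℂ] g` for any commutative `ℂ`-algebra `B`). -/
noncomputable instance loopLieAlgebra (B : Type*) [CommRing B] [Algebra ℂ B]
    (g : Type*) [LieRing g] [LieAlgebra ℂ g] : LieAlgebra ℂ (B ⊗[ℂ] g) where
  lie_smul c x y := by
    rw [← algebraMap_smul B c y, lie_smul, algebraMap_smul]

theorem aux_adjoin (g : Type*) [LieRing g] [LieAlgebra ℂ g]
    [FiniteDimensional ℂ g] [LieAlgebra.IsSimple ℂ g] :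
    Algebra.adjoin ℂ (Set.range (LieAlgebra.ad ℂ g)) = (⊤ : Subalgebra ℂ (Module.End ℂ g)) := by
  set A := Algebra.adjoin ℂ (Set.range (LieAlgebra.ad ℂ g)) with hA
  have hnt : Nontrivial g := LieAlgebra.IsSimple.nontrivial ℂ g
  have hmem : ∀ x : g, LieAlgebra.ad ℂ g x ∈ A := fun x => Algebra.subset_adjoin ⟨x, rfl⟩
  have hs : IsSimpleModule A g := by
    have : Nontrivial (Submodule A g) := inferInstance
    refine (isSimpleModule_iff A g).mpr ⟨fun N => ?_⟩
    let I : LieIdeal ℂ g :=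
      { N.restrictScalars ℂ with
        lie_mem := fun {x m} hm => N.smul_mem (⟨_, hmem x⟩ : A) hm }
    rcases LieAlgebra.IsSimple.eq_bot_or_eq_top (R := ℂ) I with h | h
    · left
      ext x
      have : x ∈ I ↔ x ∈ (⊥ : LieIdeal ℂ g) := by rw [h]
      change x ∈ N ↔ _ at this
      simpa using this
    · right
      ext x
      have : x ∈ I ↔ x ∈ (⊤ : LieIdeal ℂ g) := by rw [h]
      change x ∈ N ↔ _ at this
      simpa using this
  rw [eq_top_iff]
  rintro f -
  have hb := IsSimpleModule.algebraMap_end_bijective_of_isAlgClosed (A := A) (V := g) ℂ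
  let F : Module.End (Module.End A g) g :=
    { toFun := f
      map_add' := f.map_add
      map_smul' := by
        intro c x
        obtain ⟨c, rfl⟩ := hb.2 c
        exact f.map_smul c x }
  obtain ⟨s, hs'⟩ := Module.Finite.fg_top (R := ℂ) (M := g)
  obtain ⟨r, hr⟩ := jacobson_density F s
  have : f = r.1 := by
    refine LinearMap.ext_on hs' fun x hx => ?_
    exact hr x hx
  rw [this]
  exact r.2

theorem aux_pid : IsPrincipalIdealRing (LaurentPolynomial ℂ) := by
  refine ⟨fun I => ?_⟩
  rw [← IsLocalization.map_under (Submonoid.powers (Polynomial.X : Polynomial ℂ)) (LaurentPolynomial ℂ) I]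
  obtain ⟨f, hf⟩ := IsPrincipalIdealRing.principal (I.under (Polynomial ℂ))
  refine ⟨algebraMap _ _ f, ?_⟩
  rw [hf]
  exact (Ideal.map_span _ _).trans (by simp)

theorem aux_span (g : Type*) [LieRing g] [LieAlgebra ℂ g]
    [LieAlgebra.IsSimple ℂ g] :
    Submodule.span ℂ {m : g | ∃ x y : g, ⁅x, y⁆ = m} = ⊤ := by
  have h : (⁅(⊤ : LieIdeal ℂ g), (⊤ : LieIdeal ℂ g)⁆ : LieIdeal ℂ g) = ⊤ := by
    refine (LieAlgebra.IsSimple.eq_bot_or_eq_top (R := ℂ) _).resolve_left fun h => ?_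
    apply LieAlgebra.IsSimple.non_abelian ℂ (L := g)
    refine ⟨fun x y => ?_⟩
    have := LieSubmodule.lie_mem_lie (LieSubmodule.mem_top (R := ℂ) (L := g) x)
      (LieSubmodule.mem_top (R := ℂ) (L := g) y)
    rw [h] at this
    simpa using this
  have h2 := congrArg LieSubmodule.toSubmodule h
  rw [LieSubmodule.lieIdeal_oper_eq_linear_span'] at h2
  simpa using h2

theorem aux_lie_add {g : Type*} [LieRing g] [LieAlgebra ℂ g]
    (z a b : LaurentPolynomial ℂ ⊗[ℂ] g) : ⁅z, a + b⁆ = ⁅z, a⁆ + ⁅z, b⁆ :=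
  LieRing.lie_add z a b

theorem aux_add_lie {g : Type*} [LieRing g] [LieAlgebra ℂ g]
    (z a b : LaurentPolynomial ℂ ⊗[ℂ] g) : ⁅a + b, z⁆ = ⁅a, z⁆ + ⁅b, z⁆ :=
  LieRing.add_lie a b z

theorem aux_lie_zero {g : Type*} [LieRing g] [LieAlgebra ℂ g]
    (z : LaurentPolynomial ℂ ⊗[ℂ] g) : ⁅z, (0 : LaurentPolynomial ℂ ⊗[ℂ] g)⁆ = 0 := by
  simpa using aux_lie_add z 0 0

theorem aux_zero_lie {g : Type*} [LieRing g] [LieAlgebra ℂ g]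
    (z : LaurentPolynomial ℂ ⊗[ℂ] g) : ⁅(0 : LaurentPolynomial ℂ ⊗[ℂ] g), z⁆ = 0 := by
  simpa using aux_add_lie z 0 0

theorem aux_lie_smul {g : Type*} [LieRing g] [LieAlgebra ℂ g]
    (c : ℂ) (z a : LaurentPolynomial ℂ ⊗[ℂ] g) : ⁅z, c • a⁆ = c • ⁅z, a⁆ :=
  LieAlgebra.lie_smul c z a

theorem aux_main (g : Type*) [LieRing g] [LieAlgebra ℂ g]
    [FiniteDimensional ℂ g] [LieAlgebra.IsSimple ℂ g]
    (J : Submodule ℂ (LaurentPolynomial ℂ ⊗[ℂ] g)) :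
    (∀ z : LaurentPolynomial ℂ ⊗[ℂ] g, ∀ j ∈ J, ⁅z, j⁆ ∈ J) ↔
      ∃ I : Ideal (LaurentPolynomial ℂ),
        J = Submodule.span ℂ {w : LaurentPolynomial ℂ ⊗[ℂ] g |
              ∃ p ∈ I, ∃ x : g, w = p ⊗ₜ[ℂ] x} := by
  constructor
  · intro hJ
    have hA : ∀ f : Module.End ℂ g, ∀ j ∈ J, f.lTensor (LaurentPolynomial ℂ) j ∈ J := by
      intro f
      have hf : f ∈ Algebra.adjoin ℂ (Set.range (LieAlgebra.ad ℂ g)) := by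
        rw [aux_adjoin]; trivial
      induction hf using Algebra.adjoin_induction with
      | mem f hf =>
        obtain ⟨x, rfl⟩ := hf
        intro j hj
        have : (LieAlgebra.ad ℂ g x).lTensor (LaurentPolynomial ℂ) j
            = ⁅(1 : LaurentPolynomial ℂ) ⊗ₜ[ℂ] x, j⁆ := by
          clear hj
          induction j using TensorProduct.induction_on with
          | zero => rw [aux_lie_zero, map_zero]
          | tmul p y => simp [LieAlgebra.ExtendScalars.bracket_tmul]
          | add a b ha hb => rw [map_add, ha, hb, aux_lie_add]
        rw [this]
        exact hJ _ _ hj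
      | algebraMap c =>
        intro j hj
        have : (algebraMap ℂ (Module.End ℂ g) c).lTensor (LaurentPolynomial ℂ) j = c • j := by
          rw [Module.algebraMap_end_eq_smul_id, LinearMap.lTensor_smul]; simp
        rw [this]
        exact J.smul_mem _ hj
      | add a b _ _ ha hb =>
        intro j hj
        rw [LinearMap.lTensor_add]
        exact J.add_mem (ha j hj) (hb j hj)
      | mul a b _ _ ha hb =>
        intro j hj
        rw [LinearMap.lTensor_mul]
        exact ha _ (hb j hj)
    let I : Ideal (LaurentPolynomial ℂ) :=
      { carrier := {p | ∀ x : g, p ⊗ₜ[ℂ] x ∈ J}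
        zero_mem' := fun x => by simp
        add_mem' := fun {a b} ha hb x => by
          rw [TensorProduct.add_tmul]; exact J.add_mem (ha x) (hb x)
        smul_mem' := fun q p hp x => by
          have hx : x ∈ Submodule.span ℂ {m : g | ∃ x y : g, ⁅x, y⁆ = m} := by
            rw [aux_span]; trivial
          induction hx using Submodule.span_induction with
          | mem x hx =>
            obtain ⟨u, v, rfl⟩ := hx
            exact hJ (q ⊗ₜ[ℂ] u) _ (hp v)
          | zero => simp
          | add a b _ _ ha hb => rw [TensorProduct.tmul_add]; exact J.add_mem ha hb
          | smul c a _ ha => rw [TensorProduct.tmul_smul]; exact J.smul_mem _ ha }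
    refine ⟨I, le_antisymm (fun j hj => ?_) (Submodule.span_le.mpr ?_)⟩
    · let b := Module.finBasis ℂ g
      have hc : ∀ (i) (x : g), ((b.coord i).smulRight x).lTensor (LaurentPolynomial ℂ) j
          = (TensorProduct.rid ℂ _ ((b.coord i).lTensor (LaurentPolynomial ℂ) j)) ⊗ₜ[ℂ] x := by
        intro i x
        clear hj
        induction j using TensorProduct.induction_on with
        | zero => simp
        | tmul p y => simp [TensorProduct.smul_tmul]
        | add a b ha hb => simp only [map_add, ha, hb, TensorProduct.add_tmul]
      have hsum : j = ∑ i, ((b.coord i).smulRight (b i)).lTensor (LaurentPolynomial ℂ) j := by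
        clear hj hc
        induction j using TensorProduct.induction_on with
        | zero => simp
        | tmul p y =>
          simp only [LinearMap.lTensor_tmul, ← TensorProduct.tmul_sum]
          congr 1
          exact (b.sum_repr y).symm
        | add u v hu hv =>
          simp only [map_add, Finset.sum_add_distrib]
          rw [← hu, ← hv]
      rw [hsum]
      refine Submodule.sum_mem _ fun i _ => Submodule.subset_span ?_
      refine ⟨_, ?_, b i, hc i (b i)⟩
      intro x
      rw [← hc]
      exact hA _ _ hj
    · rintro _ ⟨p, hp, x, rfl⟩
      exact hp x
  · rintro ⟨I, rfl⟩ z j hj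
    induction hj using Submodule.span_induction with
    | mem j hj =>
      obtain ⟨p, hp, x, rfl⟩ := hj
      induction z using TensorProduct.induction_on with
      | zero => rw [aux_zero_lie]; exact Submodule.zero_mem _
      | tmul q y =>
        exact Submodule.subset_span ⟨q * p, I.mul_mem_left q hp, ⁅y, x⁆, rfl⟩
      | add a b ha hb => rw [aux_add_lie]; exact Submodule.add_mem _ ha hb
    | zero => rw [aux_lie_zero]; exact Submodule.zero_mem _
    | add a b _ _ ha hb => rw [aux_lie_add]; exact Submodule.add_mem _ ha hb
    | smul c a _ ha => rw [aux_lie_smul]; exact Submodule.smul_mem _ _ ha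

/-- A `ℂ`-subspace `J` of the loop algebra `L(g) = ℂ[t,t⁻¹] ⊗ g` of a finite-dimensional
simple complex Lie algebra `g` is a Lie ideal if and only if `J = I ⊗ g` for some ideal
`I` of `ℂ[t,t⁻¹]`; equivalently (as `ℂ[t,t⁻¹]` is a PID), if and only if
`J = f·ℂ[t,t⁻¹] ⊗ g` for some Laurent polynomial `f`. -/
theorem loopAlgebra_isIdeal_iff (g : Type*) [LieRing g] [LieAlgebra ℂ g]
    [FiniteDimensional ℂ g] [LieAlgebra.IsSimple ℂ g]
    (J : Submodule ℂ (LaurentPolynomial ℂ ⊗[ℂ] g)) :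
    ((∀ z : LaurentPolynomial ℂ ⊗[ℂ] g, ∀ j ∈ J, ⁅z, j⁆ ∈ J) ↔
      ∃ I : Ideal (LaurentPolynomial ℂ),
        J = Submodule.span ℂ {w : LaurentPolynomial ℂ ⊗[ℂ] g |
              ∃ p ∈ I, ∃ x : g, w = p ⊗ₜ[ℂ] x}) ∧
    ((∀ z : LaurentPolynomial ℂ ⊗[ℂ] g, ∀ j ∈ J, ⁅z, j⁆ ∈ J) ↔
      ∃ f : LaurentPolynomial ℂ,
        J = Submodule.span ℂ {w : LaurentPolynomial ℂ ⊗[ℂ] g |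
              ∃ p ∈ Ideal.span {f}, ∃ x : g, w = p ⊗ₜ[ℂ] x}) := by
  refine ⟨aux_main g J, (aux_main g J).trans ⟨?_, ?_⟩⟩
  · rintro ⟨I, hI⟩
    obtain ⟨f, hf⟩ := aux_pid.principal I
    exact ⟨f, by rw [hI, hf]⟩
  · rintro ⟨f, hf⟩
    exact ⟨_, hf⟩
end

section
/- Let g be a finite-dimensional simple Lie algebra over ℂ and let L(g) = ℂ[t,t⁻¹] ⊗ g be its loop algebra. Every nonzero Lie ideal J of L(g) has finite codimension; that is, the quotient Lie algebra L(g)/J is finite-dimensional over ℂ. -/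
open scoped TensorProduct

theorem laurent_fin (p : LaurentPolynomial ℂ) (hp : p ≠ 0) :
    Module.Finite ℂ (LaurentPolynomial ℂ ⧸ Ideal.span {p}) := by
  let π := Ideal.Quotient.mkₐ ℂ (Ideal.span {p})
  have h1 : IsIntegral ℂ (π (LaurentPolynomial.T 1)) := by
    obtain ⟨n, f, hf⟩ := LaurentPolynomial.exists_T_pow p
    rw [← isAlgebraic_iff_isIntegral]
    refine ⟨f, ?_, ?_⟩
    · rintro rfl
      rw [map_zero] at hf
      have := (LaurentPolynomial.isUnit_T (R := ℂ) n).mul_left_eq_zero.1 hf.symm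
      exact hp this
    · rw [Polynomial.aeval_algHom_apply]
      have : Polynomial.aeval (LaurentPolynomial.T 1 : LaurentPolynomial ℂ) f
          = Polynomial.toLaurent f := by
        rw [← Polynomial.toLaurentAlg_apply]
        congr 1
        ext; simp
      rw [this, hf]
      exact Ideal.Quotient.eq_zero_iff_mem.2 (Ideal.mul_mem_right _ _ (Ideal.mem_span_singleton_self p))
  have h2 : IsIntegral ℂ (π (LaurentPolynomial.T (-1))) := by
    obtain ⟨n, f, hf⟩ := LaurentPolynomial.exists_T_pow (LaurentPolynomial.invert p)
    rw [← isAlgebraic_iff_isIntegral]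
    refine ⟨f, ?_, ?_⟩
    · rintro rfl
      rw [map_zero] at hf
      have := (LaurentPolynomial.isUnit_T (R := ℂ) n).mul_left_eq_zero.1 hf.symm
      exact hp (by simpa using this)
    · rw [Polynomial.aeval_algHom_apply]
      have : Polynomial.aeval (LaurentPolynomial.T (-1) : LaurentPolynomial ℂ) f
          = LaurentPolynomial.invert (Polynomial.toLaurent f) := by
        have : Polynomial.aeval (LaurentPolynomial.T (-1) : LaurentPolynomial ℂ)
          = (LaurentPolynomial.invert (R := ℂ)).toAlgHom.comp Polynomial.toLaurentAlg := by
          ext; simp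
        rw [this]; simp
      rw [this, hf, map_mul, LaurentPolynomial.involutive_invert]
      exact Ideal.Quotient.eq_zero_iff_mem.2 (Ideal.mul_mem_right _ _ (Ideal.mem_span_singleton_self p))
  have h3 := fg_adjoin_of_finite (R := ℂ) (s := {π (LaurentPolynomial.T 1), π (LaurentPolynomial.T (-1))})
    (by simp) (by rintro x (rfl | rfl) <;> assumption)
  refine ⟨?_⟩
  suffices h : Subalgebra.toSubmodule (Algebra.adjoin ℂ
      {π (LaurentPolynomial.T 1), π (LaurentPolynomial.T (-1))}) = ⊤ from h ▸ h3
  rw [eq_top_iff]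
  rintro x -
  obtain ⟨q, rfl⟩ := Ideal.Quotient.mkₐ_surjective ℂ _ x
  change π q ∈ Algebra.adjoin ℂ {π (LaurentPolynomial.T 1), π (LaurentPolynomial.T (-1))}
  induction q using LaurentPolynomial.induction_on with
  | h_C a => 
    rw [LaurentPolynomial.C_eq_algebraMap, AlgHom.commutes]; exact Subalgebra.algebraMap_mem _ _
  | h_add hp hq => rw [map_add]; exact add_mem hp hq
  | h_C_mul_T n a h =>
    rw [LaurentPolynomial.T_add, ← mul_assoc, map_mul]
    exact mul_mem h (Algebra.subset_adjoin (by simp))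
  | h_C_mul_T_Z n a h =>
    rw [LaurentPolynomial.T_sub, ← mul_assoc, map_mul]
    exact mul_mem h (Algebra.subset_adjoin (by simp))

theorem burnside_ad (g : Type*) [LieRing g] [LieAlgebra ℂ g]
    [FiniteDimensional ℂ g] [LieAlgebra.IsSimple ℂ g] (f : Module.End ℂ g) :
    f ∈ Algebra.adjoin ℂ (Set.range (LieAlgebra.ad ℂ g)) := by
  let A := Algebra.adjoin ℂ (Set.range (LieAlgebra.ad ℂ g : g → Module.End ℂ g))
  have had (x : g) : LieAlgebra.ad ℂ g x ∈ A := Algebra.subset_adjoin ⟨x, rfl⟩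
  have : Nontrivial g := LieAlgebra.IsSimple.nontrivial ℂ g
  have hs : IsSimpleModule A g := by
    rw [isSimpleModule_iff]
    refine { exists_pair_ne := ⟨⊥, ⊤, bot_ne_top⟩, eq_bot_or_eq_top := fun N => ?_ }
    let I : LieIdeal ℂ g :=
      { N.restrictScalars ℂ with
        lie_mem := fun {x m} hm => N.smul_mem (⟨_, had x⟩ : A) hm }
    have hI (x : g) : x ∈ I ↔ x ∈ N := Iff.rfl
    rcases LieAlgebra.IsSimple.eq_bot_or_eq_top (R := ℂ) I with h | h
    · left
      rw [eq_bot_iff]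
      intro x hx
      rw [← hI, h] at hx
      simpa using hx
    · right
      rw [eq_top_iff]
      intro x _
      rw [← hI, h]
      trivial
  have hb := IsSimpleModule.algebraMap_end_bijective_of_isAlgClosed (A := A) (V := g) ℂ
  let F : Module.End (Module.End A g) g :=
    { toFun := f
      map_add' := map_add f
      map_smul' := by
        intro c x
        obtain ⟨c, rfl⟩ := hb.2 c
        simp }
  obtain ⟨s, hs'⟩ := Module.Finite.fg_top (R := ℂ) (M := g)
  obtain ⟨r, hr⟩ := jacobson_density (R := A) F s
  have : f = r.1 := by
    refine LinearMap.ext_on hs' ?_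
    intro x hx
    exact hr x hx
  rw [this]
  exact r.2

theorem lie_span_top (g : Type*) [LieRing g] [LieAlgebra ℂ g] [LieAlgebra.IsSimple ℂ g] :
    Submodule.span ℂ {z : g | ∃ x y : g, ⁅x, y⁆ = z} = ⊤ := by
  let I : LieIdeal ℂ g :=
    { Submodule.span ℂ {z : g | ∃ x y : g, ⁅x, y⁆ = z} with
      lie_mem := fun {x m} _ => Submodule.subset_span ⟨x, m, rfl⟩ }
  have hI (x : g) : x ∈ I ↔ x ∈ Submodule.span ℂ {z : g | ∃ x y : g, ⁅x, y⁆ = z} := Iff.rfl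
  rcases LieAlgebra.IsSimple.eq_bot_or_eq_top (R := ℂ) I with h | h
  · exfalso
    refine LieAlgebra.IsSimple.non_abelian ℂ (L := g) ⟨fun x y => ?_⟩
    have : ⁅x, y⁆ ∈ I := (hI _).2 (Submodule.subset_span ⟨x, y, rfl⟩)
    rw [h] at this
    simpa using this
  · rw [eq_top_iff]
    intro x _
    rw [← hI, h]
    trivial

/-- Every nonzero Lie ideal of the loop algebra `L(g) = ℂ[t,t⁻¹] ⊗ g` of a
finite-dimensional simple complex Lie algebra `g` has finite codimension:
the quotient Lie algebra is finite-dimensional over `ℂ`. -/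
theorem loopAlgebra_quotient_finiteDimensional (g : Type*) [LieRing g] [LieAlgebra ℂ g]
    [FiniteDimensional ℂ g] [LieAlgebra.IsSimple ℂ g]
    (J : LieIdeal ℂ (LaurentPolynomial ℂ ⊗[ℂ] g)) (hJ : J ≠ ⊥) :
    FiniteDimensional ℂ ((LaurentPolynomial ℂ ⊗[ℂ] g) ⧸ J) := by
  classical
  -- the whole endomorphism algebra of `g` preserves `J`
  have hT : ∀ f : Module.End ℂ g, ∀ j ∈ J, f.lTensor (LaurentPolynomial ℂ) j ∈ J := by
    intro f
    induction burnside_ad g f using Algebra.adjoin_induction with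
    | mem f hf =>
      obtain ⟨x, rfl⟩ := hf
      intro j hj
      have : (LieAlgebra.ad ℂ g x).lTensor (LaurentPolynomial ℂ) j
          = ⁅(1 : LaurentPolynomial ℂ) ⊗ₜ[ℂ] x, j⁆ := by
        clear hj
        induction j using TensorProduct.induction_on with
        | zero => exact (map_zero _).trans (lie_zero ((1 : LaurentPolynomial ℂ) ⊗ₜ[ℂ] x)).symm
        | tmul p v => simp
        | add a b ha hb =>
          rw [map_add, ha, hb]
          exact (lie_add ((1 : LaurentPolynomial ℂ) ⊗ₜ[ℂ] x) a b).symm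
      rw [this]
      exact lie_mem_right ℂ _ J _ _ hj
    | algebraMap c =>
      intro j hj
      have : (algebraMap ℂ (Module.End ℂ g) c).lTensor (LaurentPolynomial ℂ) j = c • j := by
        rw [Module.algebraMap_end_eq_smul_id, LinearMap.lTensor_smul]; simp
      rw [this]
      exact J.smul_mem c hj
    | add f f' _ _ h h' =>
      intro j hj
      rw [LinearMap.lTensor_add]
      exact J.add_mem (h j hj) (h' j hj)
    | mul f f' _ _ h h' =>
      intro j hj
      rw [LinearMap.lTensor_mul]
      exact h _ (h' j hj)
  obtain ⟨j, hj, hj0⟩ : ∃ j ∈ J, j ≠ 0 := by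
    by_contra! h
    exact hJ ((LieSubmodule.eq_bot_iff J).2 h)
  let b := Module.finBasis ℂ g
  let e := TensorProduct.equivFinsuppOfBasisRight (M := LaurentPolynomial ℂ) b
  have he : e j ≠ 0 := by simpa using hj0
  obtain ⟨k, hk⟩ := Finsupp.ne_iff.1 he
  set p := e j k with hp
  have hp0 : p ≠ 0 := by simpa using hk
  have h1 : ∀ v : g, p ⊗ₜ[ℂ] v ∈ J := by
    intro v
    have : ∀ j : LaurentPolynomial ℂ ⊗[ℂ] g,
        ((b.coord k).smulRight v).lTensor (LaurentPolynomial ℂ) j = (e j k) ⊗ₜ[ℂ] v := by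
      intro j
      induction j using TensorProduct.induction_on with
      | zero => simp
      | tmul q w => simp [e, TensorProduct.smul_tmul]
      | add a b ha hb => rw [map_add, ha, hb, map_add, Finsupp.add_apply, TensorProduct.add_tmul]
    rw [hp, ← this]
    exact hT _ _ hj
  have h2 : ∀ (q : LaurentPolynomial ℂ) (v : g), (q * p) ⊗ₜ[ℂ] v ∈ J := by
    intro q v
    have hv : v ∈ Submodule.span ℂ {z : g | ∃ x y : g, ⁅x, y⁆ = z} := by
      rw [lie_span_top]; trivial
    induction hv using Submodule.span_induction with
    | mem z hz =>
      obtain ⟨x, y, rfl⟩ := hz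
      rw [← LieAlgebra.ExtendScalars.bracket_tmul]
      exact lie_mem_right ℂ _ J _ _ (h1 y)
    | zero => simp
    | add x y _ _ hx hy => rw [TensorProduct.tmul_add]; exact J.add_mem hx hy
    | smul c x _ hx => rw [TensorProduct.tmul_smul]; exact J.smul_mem c hx
  have hfin := laurent_fin p hp0
  let mkJ : (LaurentPolynomial ℂ ⊗[ℂ] g) →ₗ[ℂ] ((LaurentPolynomial ℂ ⊗[ℂ] g) ⧸ J) :=
    J.toSubmodule.mkQ
  let φ : LaurentPolynomial ℂ →ₗ[ℂ] (g →ₗ[ℂ] ((LaurentPolynomial ℂ ⊗[ℂ] g) ⧸ J)) :=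
    (TensorProduct.mk ℂ (LaurentPolynomial ℂ) g).compr₂ mkJ
  have hφ : (Ideal.span {p}).restrictScalars ℂ ≤ LinearMap.ker φ := by
    intro x hx
    obtain ⟨q, rfl⟩ := Ideal.mem_span_singleton'.1 hx
    rw [LinearMap.mem_ker]
    ext v
    exact (Submodule.Quotient.mk_eq_zero _).2 (h2 q v)
  let ψ : (LaurentPolynomial ℂ ⧸ Ideal.span {p}) →ₗ[ℂ]
      (g →ₗ[ℂ] ((LaurentPolynomial ℂ ⊗[ℂ] g) ⧸ J)) :=
    ((Ideal.span {p}).restrictScalars ℂ).liftQ φ hφ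
  refine Module.Finite.of_surjective (TensorProduct.lift ψ) ?_
  intro y
  obtain ⟨z, rfl⟩ := Submodule.mkQ_surjective J.toSubmodule y
  induction z using TensorProduct.induction_on with
  | zero => exact ⟨0, by simp⟩
  | tmul q v => exact ⟨Ideal.Quotient.mk _ q ⊗ₜ v, rfl⟩
  | add a b ha hb =>
    obtain ⟨a', ha⟩ := ha
    obtain ⟨b', hb⟩ := hb
    exact ⟨a' + b', by rw [map_add, map_add, ha, hb]⟩
end

section
/- Let g be a finite-dimensional semisimple Lie algebra over ℂ with splitting Cartan subalgebra h, set of roots R ⊆ h* (the nonzero weights of the adjoint action of h on g), coroots h_β ∈ h for β ∈ R (so β(h_β) = 2), and root spaces g_β. Let W be the group of linear automorphisms of h* generated by the reflections s_β : χ ↦ χ − χ(h_β)·β for β ∈ R, and let Δ ⊆ R be a base of the root system, with Q⁺ the set of ℕ-linear combinations of elements of Δ. Let V be a nonzero finite-dimensional g-module which is the direct sum of its weight spaces V_χ = {v ∈ V : x·v = χ(x)·v for all x ∈ h}, and let wt(V) denote its set of weights. Suppose λ ∈ wt(V) satisfies: (i) λ − χ ∈ Q⁺ for every χ ∈ wt(V),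 and (ii) wt(V) is W-invariant. If w ∈ W and α ∈ Δ are such that (wλ)(h_α) is a nonpositive integer, then wλ − α ∉ wt(V); in particular, x·V_{wλ} = 0 for every x in the root space g_{−α}. -/
open Module

section WeightSpaces

variable {g : Type} [LieRing g] [LieAlgebra ℂ g] (H : LieSubalgebra ℂ g)

/-- The `χ`-weight space of a module `V` over a Lie algebra `g`, with respect to a
subalgebra `H`: the subspace of vectors `v` with `x·v = χ(x)·v` for all `x ∈ H`.
Taking `V := g` (with the adjoint action) this is the root space `g_χ`. -/
def wtSpace (V : Type) [AddCommGroup V] [Module ℂ V] [LieRingModule g V]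
    [LieModule ℂ g V] (χ : Dual ℂ H) : Submodule ℂ V where
  carrier := {v | ∀ x : H, ⁅x, v⁆ = χ x • v}
  add_mem' := fun {a b} ha hb => by
    intro x; rw [lie_add, ha x, hb x, smul_add]
  zero_mem' := fun x => by rw [lie_zero, smul_zero]
  smul_mem' := fun c a ha => by
    intro x; rw [lie_smul, ha x, smul_comm]

end WeightSpaces

/-- Let `g` be a finite-dimensional semisimple complex Lie algebra with splitting
Cartan subalgebra `H`, root set `R`, coroots `h_β` (normalized by `β(h_β) = 2` and
`h_β ∈ [g_β, g_{−β}]`), Weyl group `W` generated by the reflections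
`s_β : χ ↦ χ − χ(h_β)·β`, and base `Δ` of `R` with positive cone `Q⁺`.  Let `V` be a
nonzero finite-dimensional weight module whose set of weights lies in `λ − Q⁺` and is
`W`-invariant.  If `w ∈ W` and `α ∈ Δ` are such that `(wλ)(h_α)` is a nonpositive
integer, then `wλ − α` is not a weight of `V`; in particular the root space `g_{−α}`
kills the weight space `V_{wλ}`. -/
theorem weight_space_stability
    (g : Type) [LieRing g] [LieAlgebra ℂ g] [FiniteDimensional ℂ g]
    [LieAlgebra.IsSemisimple ℂ g]
    (H : LieSubalgebra ℂ g) [H.IsCartanSubalgebra]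
    -- `H` is splitting: `g` is the sum of the simultaneous eigenspaces of `ad H`
    (hsplit : ⨆ χ : Dual ℂ H, wtSpace H g χ = ⊤)
    -- the roots: the nonzero weights of the adjoint action of `H` on `g`
    (R : Set (Dual ℂ H))
    (hR : R = {χ : Dual ℂ H | χ ≠ 0 ∧ wtSpace H g χ ≠ ⊥})
    -- the coroots
    (coroot : Dual ℂ H → H)
    (hcoroot : ∀ β ∈ R, β (coroot β) = 2 ∧
      ∃ x ∈ wtSpace H g β, ∃ y ∈ wtSpace H g (-β), (coroot β : g) = ⁅x, y⁆)
    -- the Weyl group: the group of linear automorphisms of `H*` generated by the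
    -- reflections `s_β : χ ↦ χ − χ(h_β)·β`, for `β ∈ R`
    (W : Subgroup ((Dual ℂ H) ≃ₗ[ℂ] (Dual ℂ H)))
    (hW : W = Subgroup.closure
      {σ : (Dual ℂ H) ≃ₗ[ℂ] (Dual ℂ H) | ∃ β ∈ R, ∀ χ, σ χ = χ - χ (coroot β) • β})
    -- a base `Δ` of the root system `R`
    (Δ : Set (Dual ℂ H)) (hΔR : Δ ⊆ R)
    (hΔind : LinearIndependent ℂ ((↑) : Δ → Dual ℂ H))
    (hΔbase : ∀ β ∈ R, ∃ c : Δ →₀ ℤ,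
      β = c.sum (fun i n => n • (i : Dual ℂ H)) ∧
        ((∀ i, 0 ≤ c i) ∨ (∀ i, c i ≤ 0)))
    -- `V` is a nonzero finite-dimensional weight module
    (V : Type) [AddCommGroup V] [Module ℂ V] [LieRingModule g V] [LieModule ℂ g V]
    [FiniteDimensional ℂ V] [Nontrivial V]
    (hwt : ⨆ χ : Dual ℂ H, wtSpace H V χ = ⊤)
    (lam : Dual ℂ H) (hlam : wtSpace H V lam ≠ ⊥)
    -- (i) every weight `χ` of `V` satisfies `λ − χ ∈ Q⁺`
    (hhigh : ∀ χ : Dual ℂ H, wtSpace H V χ ≠ ⊥ →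
      ∃ c : Δ →₀ ℕ, lam - χ = c.sum fun i n => (n : ℂ) • (i : Dual ℂ H))
    -- (ii) the set of weights of `V` is `W`-invariant
    (hWinv : ∀ σ ∈ W, ∀ χ : Dual ℂ H, wtSpace H V χ ≠ ⊥ → wtSpace H V (σ χ) ≠ ⊥)
    (w : (Dual ℂ H) ≃ₗ[ℂ] (Dual ℂ H)) (hw : w ∈ W)
    (α : Dual ℂ H) (hα : α ∈ Δ)
    -- `(wλ)(h_α)` is a nonpositive integer
    (hneg : ∃ n : ℤ, n ≤ 0 ∧ (w lam) (coroot α) = (n : ℂ)) :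
    wtSpace H V (w lam - α) = ⊥ ∧
      ∀ x ∈ wtSpace H g (-α), ∀ v ∈ wtSpace H V (w lam), ⁅x, v⁆ = 0 := by
  have key : wtSpace H V (w lam - α) = ⊥ := by
    by_contra hne
    obtain ⟨n, hn, hnw⟩ := hneg
    have h2 : α (coroot α) = 2 := (hcoroot α (hΔR hα)).1
    have h2' : Dual.eval ℂ H (coroot α) α = 2 := h2
    -- the reflection in `α`
    let s : (Dual ℂ H) ≃ₗ[ℂ] (Dual ℂ H) := Module.reflection h2'
    have hs : ∀ χ, s χ = χ - χ (coroot α) • α := fun χ => by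
      simp [s, Module.reflection_apply]
    have hsW : s ∈ W := by
      rw [hW]
      exact Subgroup.subset_closure ⟨α, hΔR hα, hs⟩
    obtain ⟨m, hm⟩ : ∃ m : ℕ, (m : ℤ) = -n := ⟨(-n).toNat, by omega⟩
    have hmC : (n : ℂ) = -(m : ℂ) := by
      have : n = -(m : ℤ) := by omega
      rw [this]; push_cast; rfl
    have h3 := hWinv s hsW _ hne
    have h4 : s (w lam - α) = w lam + ((m : ℂ) + 1) • α := by
      rw [hs, LinearMap.sub_apply, hnw, h2, hmC]
      module
    rw [h4] at h3
    have hw' : w⁻¹ ∈ W := W.inv_mem hw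
    have hww : ∀ χ, w⁻¹ (w χ) = χ := fun χ => w.symm_apply_apply χ
    have h5 := hWinv _ hw' _ hne
    have h6 := hWinv _ hw' _ h3
    rw [map_sub, hww] at h5
    rw [map_add, map_smul, hww] at h6
    obtain ⟨c, hc⟩ := hhigh _ h5
    obtain ⟨d, hd⟩ := hhigh _ h6
    have hc' : w⁻¹ α = c.sum fun i n => (n : ℂ) • (i : Dual ℂ H) := by
      rw [← hc]; abel
    have hd' : -(((m : ℂ) + 1) • w⁻¹ α) = d.sum fun i n => (n : ℂ) • (i : Dual ℂ H) := by
      rw [← hd]; abel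
    have hN : LinearIndependent ℕ ((↑) : Δ → Dual ℂ H) :=
      hΔind.restrict_scalars' ℕ
    have e : ∀ c : Δ →₀ ℕ, (c.sum fun i n => (n : ℂ) • (i : Dual ℂ H)) =
        Finsupp.linearCombination ℕ ((↑) : Δ → Dual ℂ H) c := fun c => by
      rw [Finsupp.linearCombination_apply]
      simp only [Nat.cast_smul_eq_nsmul]
    rw [e] at hc' hd'
    have hz : Finsupp.linearCombination ℕ ((↑) : Δ → Dual ℂ H) (d + (m + 1) • c) = 0 := by
      rw [map_add, map_nsmul, ← hc', ← hd', ← Nat.cast_smul_eq_nsmul ℂ]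
      push_cast
      module
    have hz' : d + (m + 1) • c = 0 := by
      apply hN
      rw [hz, map_zero]
    have hc0 : c = 0 := by
      ext i
      have := DFunLike.congr_fun hz' i
      simp at this
      simpa using this.2
    rw [hc0, map_zero] at hc'
    have hα0 : α = 0 := by
      have := w⁻¹.map_eq_zero_iff.1 hc'
      exact this
    rw [hα0] at h2
    simp at h2
  refine ⟨key, fun x hx v hv => ?_⟩
  have hmem : ⁅x, v⁆ ∈ wtSpace H V (w lam - α) := by
    intro t
    have h1 : ⁅(t : g), x⁆ = (-α) t • x := hx t
    have h2 : ⁅(t : g), v⁆ = (w lam) t • v := hv t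
    change ⁅(t : g), ⁅x, v⁆⁆ = _
    rw [leibniz_lie, h1, h2, smul_lie, lie_smul, ← add_smul]
    congr 1
    simp only [LinearMap.neg_apply, LinearMap.sub_apply]
    ring
  rw [key] at hmem
  simpa using hmem
end
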